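/- Let v : ℝ³ → ℝ³ be three times continuously differentiable with div v = 0 on ℝ³. Then at every point of the form (z, 0, θ̄) (i.e. with r̄ = 0), the frame components of v satisfy ∂_z∂_θ̄(∂_z v_z) = −∂_z∂_r̄∂_θ̄ v_r̄ + κ'(θ̄)·∂_z v_r̄ + κ(θ̄)·∂_z∂_θ̄ v_r̄ − ∂_z∂_θ̄² v_θ̄. -/

import Mathlib

/-- Partial derivative in the `j`-th coordinate direction on Euclidean `ℝ³`. -/
noncomputable def pdE {F : Type*} [NormedAddCommGroup F] [NormedSpace ℝ F]
    (j : Fin 3) (g : EuclideanSpace ℝ (Fin 3) → F) (x : EuclideanSpace ℝ (Fin 3)) : F :=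
  fderiv ℝ g x (EuclideanSpace.single j 1)

/-- Euclidean divergence `div v = ∂₁v₁ + ∂₂v₂ + ∂₃v₃`. -/
noncomputable def div3 (v : EuclideanSpace ℝ (Fin 3) → EuclideanSpace ℝ (Fin 3))
    (x : EuclideanSpace ℝ (Fin 3)) : ℝ :=
  ∑ i : Fin 3, pdE i (fun y => v y i) x

/-- Curvature `κ(θ̄) = |φ''(θ̄)|` of a unit-speed plane curve. -/
noncomputable def curveKappa (φ : ℝ → EuclideanSpace ℝ (Fin 2)) (θ : ℝ) : ℝ :=
  ‖deriv (deriv φ) θ‖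

/-- Unit normal `N(θ̄) = φ''(θ̄)/|φ''(θ̄)|` of a unit-speed plane curve. -/
noncomputable def curveN (φ : ℝ → EuclideanSpace ℝ (Fin 2)) (θ : ℝ) :
    EuclideanSpace ℝ (Fin 2) :=
  ‖deriv (deriv φ) θ‖⁻¹ • deriv (deriv φ) θ

/-- The factor `f(r̄,θ̄) = 1 − r̄·κ(θ̄)`. -/
noncomputable def fFactor (φ : ℝ → EuclideanSpace ℝ (Fin 2)) (r θ : ℝ) : ℝ :=
  1 - r * curveKappa φ θ

/-- Embedding `ℝ² ∋ v ↦ (v, 0) ∈ ℝ³`. -/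
noncomputable def emb23 (v : EuclideanSpace ℝ (Fin 2)) : EuclideanSpace ℝ (Fin 3) :=
  !₂[v 0, v 1, 0]

/-- The coordinate map `T(z,r̄,θ̄) = (φ(θ̄) + r̄·N(θ̄), z)`. -/
noncomputable def Tmap (φ : ℝ → EuclideanSpace ℝ (Fin 2)) (z r θ : ℝ) :
    EuclideanSpace ℝ (Fin 3) :=
  !₂[(φ θ + r • curveN φ θ) 0, (φ θ + r • curveN φ θ) 1, z]

/-- Frame component `v_z(z,r̄,θ̄) = v(T(z,r̄,θ̄))·(0,0,1)`. -/
noncomputable def vzComp (φ : ℝ → EuclideanSpace ℝ (Fin 2))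
    (v : EuclideanSpace ℝ (Fin 3) → EuclideanSpace ℝ (Fin 3)) (z r θ : ℝ) : ℝ :=
  inner ℝ (v (Tmap φ z r θ)) (EuclideanSpace.single 2 (1:ℝ))

/-- Frame component `v_r̄(z,r̄,θ̄) = v(T(z,r̄,θ̄))·(N(θ̄),0)`. -/
noncomputable def vrComp (φ : ℝ → EuclideanSpace ℝ (Fin 2))
    (v : EuclideanSpace ℝ (Fin 3) → EuclideanSpace ℝ (Fin 3)) (z r θ : ℝ) : ℝ :=
  inner ℝ (v (Tmap φ z r θ)) (emb23 (curveN φ θ))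

/-- Frame component `v_θ̄(z,r̄,θ̄) = v(T(z,r̄,θ̄))·(φ'(θ̄),0)`. -/
noncomputable def vθComp (φ : ℝ → EuclideanSpace ℝ (Fin 2))
    (v : EuclideanSpace ℝ (Fin 3) → EuclideanSpace ℝ (Fin 3)) (z r θ : ℝ) : ℝ :=
  inner ℝ (v (Tmap φ z r θ)) (emb23 (deriv φ θ))

/-- `∂_z` for a function of `(z, r̄, θ̄)`. -/
noncomputable def Dz (g : ℝ → ℝ → ℝ → ℝ) (z r θ : ℝ) : ℝ := deriv (fun s => g s r θ) z

/-- `∂_r̄` for a function of `(z, r̄, θ̄)`. -/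
noncomputable def Dr (g : ℝ → ℝ → ℝ → ℝ) (z r θ : ℝ) : ℝ := deriv (fun s => g z s θ) r

/-- `∂_θ̄` for a function of `(z, r̄, θ̄)`. -/
noncomputable def Dθ (g : ℝ → ℝ → ℝ → ℝ) (z r θ : ℝ) : ℝ := deriv (fun s => g z r s) θ

/-!
The vectors `e_z, N, φ'` form an orthonormal frame in which `∂_z T = e_z`, `∂_r̄ T = N` and
`∂_θ̄ T = f φ'`. Taking the trace of `Dv` in this frame gives
`f div v = f (∂_z v_z + ∂_r̄ v_r̄) + ∂_θ̄ v_θ̄ - κ v_r̄`, the last term coming from `φ'' = κ N`.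
For `div v = 0` and `r̄ = 0`, where `f = 1`, this expresses `∂_z v_z` through the other components;
the theorem is its derivative `∂_z ∂_θ̄`, after `∂_θ̄ ∂_r̄ v_r̄` is rewritten as `∂_r̄ ∂_θ̄ v_r̄`.
-/

open Filter Topology

section LineDeriv

variable {E F : Type*} [NormedAddCommGroup E] [NormedSpace ℝ E]
  [NormedAddCommGroup F] [NormedSpace ℝ F] {f : E → F} {x : E} {m n : WithTop ℕ∞}

theorem lineDeriv_eventuallyEq_fderiv (hf : ContDiffAt ℝ 1 f x) (w : E) :
    (fun y => lineDeriv ℝ f y w) =ᶠ[𝓝 x] fun y => fderiv ℝ f y w := by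
  filter_upwards [hf.eventually (by simp)] with y hy
  exact (hy.differentiableAt one_ne_zero).lineDeriv_eq_fderiv

theorem contDiffAt_lineDeriv (hf : ContDiffAt ℝ n f x) (hmn : m + 1 ≤ n) (w : E) :
    ContDiffAt ℝ m (fun y => lineDeriv ℝ f y w) x :=
  ((hf.fderiv_right hmn).clm_apply contDiffAt_const).congr_of_eventuallyEq
    (lineDeriv_eventuallyEq_fderiv (hf.of_le (le_add_self.trans hmn)) w)

theorem lineDeriv_comm (hf : ContDiffAt ℝ 2 f x) (u w : E) :
    lineDeriv ℝ (fun y => lineDeriv ℝ f y u) x w =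
      lineDeriv ℝ (fun y => lineDeriv ℝ f y w) x u := by
  have hdiff : DifferentiableAt ℝ (fderiv ℝ f) x :=
    (hf.fderiv_right (m := 1) (by norm_num)).differentiableAt one_ne_zero
  have hsecond (a b : E) :
      lineDeriv ℝ (fun y => lineDeriv ℝ f y a) x b = fderiv ℝ (fderiv ℝ f) x b a := by
    rw [(lineDeriv_eventuallyEq_fderiv (hf.of_le (by norm_num)) a).lineDeriv_eq,
      (hdiff.clm_apply (differentiableAt_const a)).lineDeriv_eq_fderiv,
      fderiv_clm_apply hdiff (differentiableAt_const a)]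
    simp
  rw [hsecond, hsecond]
  exact (hf.isSymmSndFDerivAt (by simp)).eq w u

end LineDeriv

section PartialDeriv

variable {g : ℝ → ℝ → ℝ → ℝ} {z r θ : ℝ} {m n : WithTop ℕ∞}

theorem hasDerivAt_Dz (hg : DifferentiableAt ℝ ↿g (z, r, θ)) :
    HasDerivAt (fun s => g s r θ) (Dz g z r θ) z :=
  (DifferentiableAt.comp (g := ↿g) (f := fun s : ℝ => (s, r, θ)) z hg (by fun_prop)).hasDerivAt

theorem hasDerivAt_Dθ (hg : DifferentiableAt ℝ ↿g (z, r, θ)) :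
    HasDerivAt (fun s => g z r s) (Dθ g z r θ) θ :=
  (DifferentiableAt.comp (g := ↿g) (f := fun s : ℝ => (z, r, s)) θ hg (by fun_prop)).hasDerivAt

theorem uncurry_Dr (g : ℝ → ℝ → ℝ → ℝ) : ↿(Dr g) = fun p => lineDeriv ℝ ↿g p (0, 1, 0) := by
  funext ⟨z, r, θ⟩
  simpa [lineDeriv, Function.HasUncurry.uncurry, Dr] using
    (deriv_comp_const_add (fun s => g z s θ) r 0).symm

theorem uncurry_Dθ (g : ℝ → ℝ → ℝ → ℝ) : ↿(Dθ g) = fun p => lineDeriv ℝ ↿g p (0, 0, 1) := by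
  funext ⟨z, r, θ⟩
  simpa [lineDeriv, Function.HasUncurry.uncurry, Dθ] using
    (deriv_comp_const_add (fun s => g z r s) θ 0).symm

theorem contDiffAt_Dr {p : ℝ × ℝ × ℝ} (hg : ContDiffAt ℝ n ↿g p) (hmn : m + 1 ≤ n) :
    ContDiffAt ℝ m ↿(Dr g) p := by
  rw [uncurry_Dr]
  exact contDiffAt_lineDeriv hg hmn _

theorem contDiffAt_Dθ {p : ℝ × ℝ × ℝ} (hg : ContDiffAt ℝ n ↿g p) (hmn : m + 1 ≤ n) :
    ContDiffAt ℝ m ↿(Dθ g) p := by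
  rw [uncurry_Dθ]
  exact contDiffAt_lineDeriv hg hmn _

theorem Dr_Dθ_comm (hg : ContDiffAt ℝ 2 ↿g (z, r, θ)) :
    Dr (Dθ g) z r θ = Dθ (Dr g) z r θ := by
  have hrθ : Dr (Dθ g) z r θ = lineDeriv ℝ ↿(Dθ g) (z, r, θ) (0, 1, 0) :=
    congrFun (uncurry_Dr (Dθ g)) (z, r, θ)
  have hθr : Dθ (Dr g) z r θ = lineDeriv ℝ ↿(Dr g) (z, r, θ) (0, 0, 1) :=
    congrFun (uncurry_Dθ (Dr g)) (z, r, θ)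
  rw [hrθ, hθr, uncurry_Dr, uncurry_Dθ]
  exact lineDeriv_comm hg _ _

end PartialDeriv

section ConstantNorm

theorem inner_self_deriv_eq_zero_of_norm_eventually_const {E : Type*} [NormedAddCommGroup E]
    [InnerProductSpace ℝ E] {u : ℝ → E} {u' : E} {x c : ℝ} (hu : HasDerivAt u u' x)
    (hnorm : ∀ᶠ y in 𝓝 x, ‖u y‖ = c) : inner ℝ (u x) u' = 0 := by
  have hconst : (fun y => ‖u y‖ ^ 2) =ᶠ[𝓝 x] fun _ => c ^ 2 := by
    filter_upwards [hnorm] with y hy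
    rw [hy]
  have h : 2 * inner ℝ (u x) u' = 0 :=
    hu.norm_sq.unique ((hasDerivAt_const x (c ^ 2)).congr_of_eventuallyEq hconst)
  linarith

end ConstantNorm

section OrthonormalFrame

open Module

theorem exists_orthonormalBasis_coe_eq {𝕜 E ι : Type*} [RCLike 𝕜] [NormedAddCommGroup E]
    [InnerProductSpace 𝕜 E] [FiniteDimensional 𝕜 E] [Fintype ι] {b : ι → E} (hb : Orthonormal 𝕜 b)
    (hcard : finrank 𝕜 E = Fintype.card ι) : ∃ B : OrthonormalBasis ι 𝕜 E, ⇑B = b := by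
  obtain ⟨B, hB⟩ := Orthonormal.exists_orthonormalBasis_extension_of_card_eq hcard
    (s := Set.univ) (hb.comp _ Subtype.val_injective)
  exact ⟨B, funext fun i => hB i trivial⟩

theorem div3_eq_trace {v : EuclideanSpace ℝ (Fin 3) → EuclideanSpace ℝ (Fin 3)}
    {x : EuclideanSpace ℝ (Fin 3)} (hv : DifferentiableAt ℝ v x) :
    div3 v x = LinearMap.trace ℝ _ (fderiv ℝ v x).toLinearMap := by
  have hpartial (i : Fin 3) :
      pdE i (fun y => v y i) x = fderiv ℝ v x (EuclideanSpace.single i 1) i := by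
    have hcoord := (EuclideanSpace.proj (𝕜 := ℝ) i).hasFDerivAt.comp x hv.hasFDerivAt
    exact congrArg (· (EuclideanSpace.single i 1)) hcoord.fderiv
  rw [LinearMap.trace_eq_sum_inner _ (EuclideanSpace.basisFun (Fin 3) ℝ)]
  simp [div3, hpartial, EuclideanSpace.inner_single_left]

end OrthonormalFrame

section Curve

variable {φ : ℝ → EuclideanSpace ℝ (Fin 2)} {θ : ℝ} {n m : WithTop ℕ∞}

theorem curveKappa_smul_curveN (φ : ℝ → EuclideanSpace ℝ (Fin 2)) (θ : ℝ) :
    curveKappa φ θ • curveN φ θ = deriv (deriv φ) θ := by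
  by_cases h : deriv (deriv φ) θ = 0 <;> simp [curveKappa, curveN, smul_smul, h]

theorem contDiffAt_deriv_deriv (hφ : ContDiffAt ℝ n φ θ) (hmn : m + 2 ≤ n) :
    ContDiffAt ℝ m (deriv (deriv φ)) θ :=
  (hφ.derivWithin (m := m + 1) (by rwa [add_assoc, one_add_one_eq_two])).derivWithin le_rfl

theorem contDiffAt_curveKappa (hφ : ContDiffAt ℝ n φ θ) (hcurv : deriv (deriv φ) θ ≠ 0)
    (hmn : m + 2 ≤ n) : ContDiffAt ℝ m (curveKappa φ) θ :=
  (contDiffAt_deriv_deriv hφ hmn).norm ℝ hcurv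

theorem contDiffAt_curveN (hφ : ContDiffAt ℝ n φ θ) (hcurv : deriv (deriv φ) θ ≠ 0)
    (hmn : m + 2 ≤ n) : ContDiffAt ℝ m (curveN φ) θ :=
  ((contDiffAt_curveKappa hφ hcurv hmn).inv (norm_ne_zero_iff.mpr hcurv)).smul
    (contDiffAt_deriv_deriv hφ hmn)

theorem norm_curveN (hcurv : deriv (deriv φ) θ ≠ 0) : ‖curveN φ θ‖ = 1 :=
  norm_smul_inv_norm (𝕜 := ℝ) hcurv

theorem inner_deriv_curveN (hφ : ContDiffAt ℝ 2 φ θ) (hunit : ∀ᶠ t in 𝓝 θ, ‖deriv φ t‖ = 1) :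
    inner ℝ (deriv φ θ) (curveN φ θ) = 0 := by
  have hφ' : HasDerivAt (deriv φ) (deriv (deriv φ) θ) θ :=
    ((hφ.derivWithin (m := 1) (by norm_num)).differentiableAt one_ne_zero).hasDerivAt
  rw [curveN, inner_smul_right, inner_self_deriv_eq_zero_of_norm_eventually_const hφ' hunit,
    mul_zero]

theorem orthonormal_curveN_deriv (hφ : ContDiffAt ℝ 2 φ θ)
    (hunit : ∀ᶠ t in 𝓝 θ, ‖deriv φ t‖ = 1) (hcurv : deriv (deriv φ) θ ≠ 0) :
    Orthonormal ℝ ![curveN φ θ, deriv φ θ] := by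
  have horth : inner ℝ (curveN φ θ) (deriv φ θ) = 0 := by
    rw [real_inner_comm, inner_deriv_curveN hφ hunit]
  simp [orthonormal_vecCons_iff, norm_curveN hcurv, hunit.self_of_nhds, horth]

theorem hasDerivAt_curveN (hφ : ContDiffAt ℝ 3 φ θ) (hunit : ∀ᶠ t in 𝓝 θ, ‖deriv φ t‖ = 1)
    (hcurv : deriv (deriv φ) θ ≠ 0) :
    HasDerivAt (curveN φ) (-curveKappa φ θ • deriv φ θ) θ := by
  have hφ₂ : ContDiffAt ℝ 2 φ θ := hφ.of_le (by norm_num)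
  have hT : HasDerivAt (deriv φ) (curveKappa φ θ • curveN φ θ) θ := by
    rw [curveKappa_smul_curveN]
    exact ((hφ₂.derivWithin (m := 1) (by norm_num)).differentiableAt one_ne_zero).hasDerivAt
  have hN : HasDerivAt (curveN φ) (deriv (curveN φ) θ) θ :=
    ((contDiffAt_curveN (m := 1) hφ hcurv (by norm_num)).differentiableAt one_ne_zero).hasDerivAt
  have hcurv_near : ∀ᶠ t in 𝓝 θ, deriv (deriv φ) t ≠ 0 :=
    (contDiffAt_deriv_deriv (m := 0) hφ₂ (by norm_num)).continuousAt.eventually_ne hcurv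
  have hNN : inner ℝ (curveN φ θ) (deriv (curveN φ) θ) = 0 :=
    inner_self_deriv_eq_zero_of_norm_eventually_const hN
      (hcurv_near.mono fun _ => norm_curveN)
  have hTN : inner ℝ (deriv φ θ) (deriv (curveN φ) θ) = -curveKappa φ θ := by
    have horth : (fun t => inner ℝ (deriv φ t) (curveN φ t)) =ᶠ[𝓝 θ] fun _ => (0 : ℝ) := by
      filter_upwards [hφ₂.eventually (by simp), hunit.eventually_nhds] with t
      exact inner_deriv_curveN
    have h := (hT.inner ℝ hN).unique ((hasDerivAt_const θ (0 : ℝ)).congr_of_eventuallyEq horth)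
    rw [real_inner_smul_left, real_inner_self_eq_norm_sq, norm_curveN hcurv] at h
    linarith
  obtain ⟨B, hB⟩ := exists_orthonormalBasis_coe_eq (orthonormal_curveN_deriv hφ₂ hunit hcurv)
    (by simp)
  convert hN using 1
  rw [← B.sum_repr' (deriv (curveN φ) θ), hB]
  simp [hNN, hTN]

end Curve

section TubularCoordinates

variable {φ : ℝ → EuclideanSpace ℝ (Fin 2)}
  {v : EuclideanSpace ℝ (Fin 3) → EuclideanSpace ℝ (Fin 3)} {z r θ : ℝ} {m n : WithTop ℕ∞}

/-- The embedding `emb23` of the plane into `ℝ³`, bundled as a linear isometry. -/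
noncomputable def emb23ₗᵢ : EuclideanSpace ℝ (Fin 2) →ₗᵢ[ℝ] EuclideanSpace ℝ (Fin 3) where
  toFun := emb23
  map_add' x y := by ext i; fin_cases i <;> simp [emb23]
  map_smul' c x := by ext i; fin_cases i <;> simp [emb23]
  norm_map' x := by simp [emb23, EuclideanSpace.norm_eq, Fin.sum_univ_three]

theorem coe_emb23ₗᵢ : ⇑emb23ₗᵢ = emb23 := rfl

theorem Tmap_eq_emb23ₗᵢ_add (φ : ℝ → EuclideanSpace ℝ (Fin 2)) (z r θ : ℝ) :
    Tmap φ z r θ = emb23ₗᵢ (φ θ + r • curveN φ θ) + z • EuclideanSpace.single 2 (1 : ℝ) := by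
  rw [coe_emb23ₗᵢ]
  ext i
  fin_cases i <;> simp [emb23, Tmap]

theorem orthonormal_frame (hφ : ContDiffAt ℝ 2 φ θ) (hunit : ∀ᶠ t in 𝓝 θ, ‖deriv φ t‖ = 1)
    (hcurv : deriv (deriv φ) θ ≠ 0) :
    Orthonormal ℝ
      ![EuclideanSpace.single 2 (1 : ℝ), emb23 (curveN φ θ), emb23 (deriv φ θ)] := by
  have hplane := (orthonormal_curveN_deriv hφ hunit hcurv).comp_linearIsometry emb23ₗᵢ
  refine orthonormal_vecCons_iff.mpr ⟨by simp, fun i => ?_, ?_⟩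
  · fin_cases i <;> simp [emb23, EuclideanSpace.inner_single_left]
  · convert hplane using 1
    ext1 i
    fin_cases i <;> rfl

theorem hasDerivAt_Tmap_z : HasDerivAt (fun s => Tmap φ s r θ) (EuclideanSpace.single 2 1) z := by
  simp only [Tmap_eq_emb23ₗᵢ_add]
  simpa using ((hasDerivAt_id z).smul_const (EuclideanSpace.single 2 (1 : ℝ))).const_add
    (emb23ₗᵢ (φ θ + r • curveN φ θ))

theorem hasDerivAt_Tmap_r : HasDerivAt (fun s => Tmap φ z s θ) (emb23 (curveN φ θ)) r := by
  have hplane : HasDerivAt (fun s => φ θ + s • curveN φ θ) (curveN φ θ) r := by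
    simpa using ((hasDerivAt_id r).smul_const (curveN φ θ)).const_add (φ θ)
  simp only [Tmap_eq_emb23ₗᵢ_add]
  exact (emb23ₗᵢ.toContinuousLinearMap.hasFDerivAt.comp_hasDerivAt r hplane).add_const _

theorem hasDerivAt_Tmap_θ (hφ : ContDiffAt ℝ 3 φ θ) (hunit : ∀ᶠ t in 𝓝 θ, ‖deriv φ t‖ = 1)
    (hcurv : deriv (deriv φ) θ ≠ 0) :
    HasDerivAt (fun s => Tmap φ z r s) (fFactor φ r θ • emb23 (deriv φ θ)) θ := by
  have hplane : HasDerivAt (fun s => φ s + r • curveN φ s) (fFactor φ r θ • deriv φ θ) θ := by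
    have hf : fFactor φ r θ • deriv φ θ = deriv φ θ + r • -curveKappa φ θ • deriv φ θ := by
      rw [fFactor]
      module
    rw [hf]
    exact (hφ.differentiableAt three_ne_zero).hasDerivAt.add
      ((hasDerivAt_curveN hφ hunit hcurv).const_smul r)
  simp only [Tmap_eq_emb23ₗᵢ_add]
  rw [← coe_emb23ₗᵢ, ← map_smul]
  exact (emb23ₗᵢ.toContinuousLinearMap.hasFDerivAt.comp_hasDerivAt θ hplane).add_const _

theorem Dz_vzComp (hv : DifferentiableAt ℝ v (Tmap φ z r θ)) :
    Dz (vzComp φ v) z r θ =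
      inner ℝ (EuclideanSpace.single 2 1)
        (fderiv ℝ v (Tmap φ z r θ) (EuclideanSpace.single 2 1)) := by
  have h := (hv.hasFDerivAt.comp_hasDerivAt z hasDerivAt_Tmap_z).inner ℝ
    (hasDerivAt_const z (EuclideanSpace.single 2 (1 : ℝ)))
  rw [inner_zero_right, zero_add, real_inner_comm] at h
  exact h.deriv

theorem Dr_vrComp (hv : DifferentiableAt ℝ v (Tmap φ z r θ)) :
    Dr (vrComp φ v) z r θ =
      inner ℝ (emb23 (curveN φ θ)) (fderiv ℝ v (Tmap φ z r θ) (emb23 (curveN φ θ))) := by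
  have h := (hv.hasFDerivAt.comp_hasDerivAt r hasDerivAt_Tmap_r).inner ℝ
    (hasDerivAt_const r (emb23 (curveN φ θ)))
  rw [inner_zero_right, zero_add, real_inner_comm] at h
  exact h.deriv

theorem Dθ_vθComp (hφ : ContDiffAt ℝ 3 φ θ) (hunit : ∀ᶠ t in 𝓝 θ, ‖deriv φ t‖ = 1)
    (hcurv : deriv (deriv φ) θ ≠ 0) (hv : DifferentiableAt ℝ v (Tmap φ z r θ)) :
    Dθ (vθComp φ v) z r θ =
      curveKappa φ θ * vrComp φ v z r θ + fFactor φ r θ *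
        inner ℝ (emb23 (deriv φ θ)) (fderiv ℝ v (Tmap φ z r θ) (emb23 (deriv φ θ))) := by
  have hT : HasDerivAt (fun t => emb23 (deriv φ t)) (curveKappa φ θ • emb23 (curveN φ θ)) θ := by
    rw [← coe_emb23ₗᵢ, ← map_smul, curveKappa_smul_curveN]
    exact emb23ₗᵢ.toContinuousLinearMap.hasFDerivAt.comp_hasDerivAt θ
      ((hφ.derivWithin (m := 2) (by norm_num)).differentiableAt two_ne_zero).hasDerivAt
  have h := (hv.hasFDerivAt.comp_hasDerivAt θ (hasDerivAt_Tmap_θ hφ hunit hcurv)).inner ℝ hT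
  rw [real_inner_smul_right, map_smul, real_inner_smul_left,
    real_inner_comm (emb23 (deriv φ θ))] at h
  exact h.deriv

theorem fFactor_mul_div3 (hφ : ContDiffAt ℝ 3 φ θ) (hunit : ∀ᶠ t in 𝓝 θ, ‖deriv φ t‖ = 1)
    (hcurv : deriv (deriv φ) θ ≠ 0) (hv : DifferentiableAt ℝ v (Tmap φ z r θ)) :
    fFactor φ r θ * div3 v (Tmap φ z r θ) =
      fFactor φ r θ * (Dz (vzComp φ v) z r θ + Dr (vrComp φ v) z r θ)
        + Dθ (vθComp φ v) z r θ - curveKappa φ θ * vrComp φ v z r θ := by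
  obtain ⟨B, hB⟩ := exists_orthonormalBasis_coe_eq
    (orthonormal_frame (hφ.of_le (by norm_num)) hunit hcurv) (by simp)
  rw [div3_eq_trace hv, LinearMap.trace_eq_sum_inner _ B, hB, Fin.sum_univ_three,
    Dz_vzComp hv, Dr_vrComp hv, Dθ_vθComp hφ hunit hcurv hv]
  simp only [Matrix.cons_val, ContinuousLinearMap.coe_coe]
  ring

theorem contDiffAt_Tmap (hφ : ContDiffAt ℝ n φ θ) (hcurv : deriv (deriv φ) θ ≠ 0)
    (hmn : m + 2 ≤ n) : ContDiffAt ℝ m ↿(Tmap φ) (z, r, θ) := by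
  have hφm : ContDiffAt ℝ m (fun p : ℝ × ℝ × ℝ => φ p.2.2) (z, r, θ) :=
    ContDiffAt.comp (g := φ) _ (hφ.of_le (le_self_add.trans hmn)) (by fun_prop)
  have hN : ContDiffAt ℝ m (fun p : ℝ × ℝ × ℝ => curveN φ p.2.2) (z, r, θ) :=
    ContDiffAt.comp (g := curveN φ) _ (contDiffAt_curveN hφ hcurv hmn) (by fun_prop)
  have hplane : ContDiffAt ℝ m
      (fun p : ℝ × ℝ × ℝ => emb23ₗᵢ (φ p.2.2 + p.2.1 • curveN φ p.2.2)) (z, r, θ) :=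
    emb23ₗᵢ.contDiff.contDiffAt.comp _ (hφm.add (contDiffAt_snd.fst.smul hN))
  have hTmap : ↿(Tmap φ) = fun p : ℝ × ℝ × ℝ =>
      emb23ₗᵢ (φ p.2.2 + p.2.1 • curveN φ p.2.2) + p.1 • EuclideanSpace.single 2 (1 : ℝ) :=
    funext fun p => Tmap_eq_emb23ₗᵢ_add φ p.1 p.2.1 p.2.2
  rw [hTmap]
  fun_prop

theorem contDiffAt_frameComponent {w : ℝ → EuclideanSpace ℝ (Fin 2)} (hφ : ContDiffAt ℝ n φ θ)
    (hcurv : deriv (deriv φ) θ ≠ 0) (hmn : m + 2 ≤ n) (hv : ContDiffAt ℝ m v (Tmap φ z r θ))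
    (hw : ContDiffAt ℝ m w θ) :
    ContDiffAt ℝ m ↿(fun z r θ : ℝ => inner ℝ (v (Tmap φ z r θ)) (emb23 (w θ)))
      (z, r, θ) := by
  have hvT : ContDiffAt ℝ m (v ∘ ↿(Tmap φ)) (z, r, θ) :=
    ContDiffAt.comp _ hv (contDiffAt_Tmap hφ hcurv hmn)
  have hwθ : ContDiffAt ℝ m (fun p : ℝ × ℝ × ℝ => w p.2.2) (z, r, θ) :=
    ContDiffAt.comp (g := w) _ hw (by fun_prop)
  exact hvT.inner ℝ (emb23ₗᵢ.contDiff.contDiffAt.comp _ hwθ)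

theorem contDiffAt_vrComp (hφ : ContDiffAt ℝ n φ θ) (hcurv : deriv (deriv φ) θ ≠ 0)
    (hmn : m + 2 ≤ n) (hv : ContDiffAt ℝ m v (Tmap φ z r θ)) :
    ContDiffAt ℝ m ↿(vrComp φ v) (z, r, θ) :=
  contDiffAt_frameComponent hφ hcurv hmn hv (contDiffAt_curveN hφ hcurv hmn)

theorem contDiffAt_vθComp (hφ : ContDiffAt ℝ n φ θ) (hcurv : deriv (deriv φ) θ ≠ 0)
    (hmn : m + 2 ≤ n) (hv : ContDiffAt ℝ m v (Tmap φ z r θ)) :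
    ContDiffAt ℝ m ↿(vθComp φ v) (z, r, θ) :=
  contDiffAt_frameComponent hφ hcurv hmn hv
    (hφ.derivWithin ((add_le_add_right one_le_two m).trans hmn))

end TubularCoordinates

section DivergenceFree

variable {φ : ℝ → EuclideanSpace ℝ (Fin 2)}
  {v : EuclideanSpace ℝ (Fin 3) → EuclideanSpace ℝ (Fin 3)} {z θ : ℝ}

theorem Dz_vzComp_of_div3_eq_zero (hφ : ContDiffAt ℝ 3 φ θ)
    (hunit : ∀ᶠ t in 𝓝 θ, ‖deriv φ t‖ = 1) (hcurv : deriv (deriv φ) θ ≠ 0)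
    (hv : DifferentiableAt ℝ v (Tmap φ z 0 θ)) (hdiv : div3 v (Tmap φ z 0 θ) = 0) :
    Dz (vzComp φ v) z 0 θ =
      -Dr (vrComp φ v) z 0 θ + curveKappa φ θ * vrComp φ v z 0 θ - Dθ (vθComp φ v) z 0 θ := by
  have h := fFactor_mul_div3 hφ hunit hcurv hv
  rw [hdiv, fFactor] at h
  linarith

theorem Dθ_Dz_vzComp_of_div3_eq_zero (hφ : ContDiffAt ℝ 4 φ θ)
    (hunit : ∀ᶠ t in 𝓝 θ, ‖deriv φ t‖ = 1) (hcurv : deriv (deriv φ) θ ≠ 0)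
    (hv : ContDiffAt ℝ 2 v (Tmap φ z 0 θ)) (hdiv : ∀ᶠ t in 𝓝 θ, div3 v (Tmap φ z 0 t) = 0) :
    Dθ (Dz (vzComp φ v)) z 0 θ =
      -Dr (Dθ (vrComp φ v)) z 0 θ + deriv (curveKappa φ) θ * vrComp φ v z 0 θ
        + curveKappa φ θ * Dθ (vrComp φ v) z 0 θ - Dθ (Dθ (vθComp φ v)) z 0 θ := by
  have hφ₃ : ContDiffAt ℝ 3 φ θ := hφ.of_le (by norm_num)
  have hcurv_near : ∀ᶠ t in 𝓝 θ, deriv (deriv φ) t ≠ 0 :=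
    (contDiffAt_deriv_deriv (m := 0) hφ (by norm_num)).continuousAt.eventually_ne hcurv
  have hv_near : ∀ᶠ t in 𝓝 θ, ContDiffAt ℝ 2 v (Tmap φ z 0 t) :=
    (hasDerivAt_Tmap_θ hφ₃ hunit hcurv).continuousAt.eventually (hv.eventually (by simp))
  have hgerm : (fun t => Dz (vzComp φ v) z 0 t) =ᶠ[𝓝 θ] fun t =>
      -Dr (vrComp φ v) z 0 t + curveKappa φ t * vrComp φ v z 0 t - Dθ (vθComp φ v) z 0 t := by
    filter_upwards [hφ₃.eventually (by simp), hunit.eventually_nhds, hcurv_near, hv_near, hdiv]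
      with t hφt hunit_t hcurv_t hvt hdiv_t
    exact Dz_vzComp_of_div3_eq_zero hφt hunit_t hcurv_t (hvt.differentiableAt two_ne_zero) hdiv_t
  have hκ : HasDerivAt (curveKappa φ) (deriv (curveKappa φ) θ) θ :=
    ((contDiffAt_curveKappa (m := 1) hφ hcurv (by norm_num)).differentiableAt
      one_ne_zero).hasDerivAt
  have hvr : ContDiffAt ℝ 2 ↿(vrComp φ v) (z, 0, θ) :=
    contDiffAt_vrComp hφ hcurv (by norm_num) hv
  have hvθ : ContDiffAt ℝ 2 ↿(vθComp φ v) (z, 0, θ) :=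
    contDiffAt_vθComp hφ hcurv (by norm_num) hv
  have hderiv := ((hasDerivAt_Dθ ((contDiffAt_Dr (m := 1) hvr (by norm_num)).differentiableAt
      one_ne_zero)).neg.add (hκ.mul (hasDerivAt_Dθ (hvr.differentiableAt two_ne_zero)))).sub
    (hasDerivAt_Dθ ((contDiffAt_Dθ (m := 1) hvθ (by norm_num)).differentiableAt one_ne_zero))
  rw [Dr_Dθ_comm hvr, add_assoc]
  exact (hderiv.congr_of_eventuallyEq hgerm).deriv

theorem stmt9_general (hφ : ContDiffAt ℝ 5 φ θ) (hunit : ∀ᶠ t in 𝓝 θ, ‖deriv φ t‖ = 1)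
    (hcurv : deriv (deriv φ) θ ≠ 0) (hv : ContDiffAt ℝ 3 v (Tmap φ z 0 θ))
    (hdiv : ∀ᶠ p : ℝ × ℝ in 𝓝 (z, θ), div3 v (Tmap φ p.1 0 p.2) = 0) :
    Dz (Dθ (Dz (vzComp φ v))) z 0 θ =
      -Dz (Dr (Dθ (vrComp φ v))) z 0 θ + deriv (curveKappa φ) θ * Dz (vrComp φ v) z 0 θ
        + curveKappa φ θ * Dz (Dθ (vrComp φ v)) z 0 θ - Dz (Dθ (Dθ (vθComp φ v))) z 0 θ := by
  have hv_near : ∀ᶠ s in 𝓝 z, ContDiffAt ℝ 3 v (Tmap φ s 0 θ) :=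
    hasDerivAt_Tmap_z.continuousAt.eventually (hv.eventually (by simp))
  have hgerm : (fun s => Dθ (Dz (vzComp φ v)) s 0 θ) =ᶠ[𝓝 z] fun s =>
      -Dr (Dθ (vrComp φ v)) s 0 θ + deriv (curveKappa φ) θ * vrComp φ v s 0 θ
        + curveKappa φ θ * Dθ (vrComp φ v) s 0 θ - Dθ (Dθ (vθComp φ v)) s 0 θ := by
    filter_upwards [hv_near, hdiv.curry_nhds] with s hvs hdiv_s
    exact Dθ_Dz_vzComp_of_div3_eq_zero (hφ.of_le (by norm_num)) hunit hcurv
      (hvs.of_le (by norm_num)) hdiv_s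
  have hvr : ContDiffAt ℝ 3 ↿(vrComp φ v) (z, 0, θ) :=
    contDiffAt_vrComp hφ hcurv (by norm_num) hv
  have hDθvr : ContDiffAt ℝ 2 ↿(Dθ (vrComp φ v)) (z, 0, θ) := contDiffAt_Dθ hvr (by norm_num)
  have hDrDθvr : ContDiffAt ℝ 1 ↿(Dr (Dθ (vrComp φ v))) (z, 0, θ) :=
    contDiffAt_Dr hDθvr (by norm_num)
  have hDθDθvθ : ContDiffAt ℝ 1 ↿(Dθ (Dθ (vθComp φ v))) (z, 0, θ) :=
    contDiffAt_Dθ (m := 1) (n := 2) (contDiffAt_Dθ (contDiffAt_vθComp (m := 3) hφ hcurv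
      (by norm_num) hv) (by norm_num)) (by norm_num)
  have hderiv := (((hasDerivAt_Dz (hDrDθvr.differentiableAt one_ne_zero)).neg.add
      ((hasDerivAt_Dz (hvr.differentiableAt three_ne_zero)).const_mul
        (deriv (curveKappa φ) θ))).add
      ((hasDerivAt_Dz (hDθvr.differentiableAt two_ne_zero)).const_mul (curveKappa φ θ))).sub
    (hasDerivAt_Dz (hDθDθvθ.differentiableAt one_ne_zero))
  exact (hderiv.congr_of_eventuallyEq hgerm).deriv

end DivergenceFree

/-- For a `C³` divergence-free vector field `v : ℝ³ → ℝ³`, at every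
point of the form `(z, 0, θ̄)` the frame components satisfy
`∂_z∂_θ̄(∂_z v_z) = −∂_z∂_r̄∂_θ̄ v_r̄ + κ'·∂_z v_r̄ + κ·∂_z∂_θ̄ v_r̄ − ∂_z∂_θ̄² v_θ̄`. -/
theorem stmt9 (δ : ℝ) (hδ : 0 < δ) (φ : ℝ → EuclideanSpace ℝ (Fin 2))
    (hφ : ContDiffOn ℝ (⊤ : ℕ∞) φ (Set.Ioo (-δ) δ))
    (hunit : ∀ θ ∈ Set.Ioo (-δ) δ, ‖deriv φ θ‖ = 1)
    (hcurv : ∀ θ ∈ Set.Ioo (-δ) δ, deriv (deriv φ) θ ≠ 0)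
    (v : EuclideanSpace ℝ (Fin 3) → EuclideanSpace ℝ (Fin 3))
    (hv : ContDiff ℝ 3 v)
    (hdiv : ∀ x : EuclideanSpace ℝ (Fin 3), div3 v x = 0) :
    ∀ z : ℝ, ∀ θ ∈ Set.Ioo (-δ) δ,
      Dz (Dθ (Dz (vzComp φ v))) z 0 θ
        = -(Dz (Dr (Dθ (vrComp φ v))) z 0 θ)
          + deriv (curveKappa φ) θ * Dz (vrComp φ v) z 0 θ
          + curveKappa φ θ * Dz (Dθ (vrComp φ v)) z 0 θ
          - Dz (Dθ (Dθ (vθComp φ v))) z 0 θ := by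
  intro z θ hθ
  have hnhds : Set.Ioo (-δ) δ ∈ 𝓝 θ := isOpen_Ioo.mem_nhds hθ
  exact stmt9_general ((hφ.contDiffAt hnhds).of_le (WithTop.coe_le_coe.2 (le_top : (5 : ℕ∞) ≤ ⊤)))
    (eventually_of_mem hnhds hunit) (hcurv θ hθ) hv.contDiffAt (.of_forall fun _ => hdiv _)
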